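/- Let G = ℤ^{n+1} and let 𝔤 = {G = G_0 ⊇ G_1 ⊇ G_2 ⊇ ⋯} be a tower of subgroups, each of finite index in G. Assume ρ(𝔤) = n+1. Then there exist sequences of positive integers (a_k) and (b_k) with a_k → ∞ and b_k → ∞ as k → ∞, such that a_k·G ⊇ G_k ⊇ b_k·G for every k. -/

import Mathlib

noncomputable section

/-- The minimal number of generators of an additive group. -/
def mgen (H : Type) [AddGroup H] : ℕ :=
  sInf {d : ℕ | ∃ S : Finset H, S.card = d ∧ AddSubgroup.closure (S : Set H) = ⊤}

/-- `r(𝔤^{[i]})`: the maximum over `j` of the minimal number of generators of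
`G_i / G_{i+j}`, for a tower `𝔤 = {G_0 ⊇ G_1 ⊇ ⋯}`. -/
def towerR {m : ℕ} (G : ℕ → AddSubgroup (Fin m → ℤ)) (i : ℕ) : ℕ :=
  sSup {d : ℕ | ∃ j : ℕ, d = mgen (↥(G i) ⧸ ((G (i + j)).addSubgroupOf (G i)))}

/-- `ρ(𝔤)`: the limit of the non-increasing sequence `r(𝔤^{[i]})`. -/
def towerRho {m : ℕ} (G : ℕ → AddSubgroup (Fin m → ℤ)) : ℕ :=
  sInf (Set.range (towerR G))

/-- The subgroup `a·G` of all `a`-th multiples of elements of `G = ℤᵐ`. -/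
def mulSub (m : ℕ) (a : ℕ) : AddSubgroup (Fin m → ℤ) :=
  AddSubgroup.map (DistribMulAction.toAddMonoidHom (Fin m → ℤ) (a : ℤ)) ⊤

lemma key_div {L : Type} [AddCommGroup L] [Module.Free ℤ L] [Module.Finite ℤ L] (n : ℕ)
    (hL : Module.finrank ℤ L ≤ n + 1) (K : AddSubgroup L) (h : n + 1 ≤ mgen (L ⧸ K)) :
    ∃ d : ℕ, 2 ≤ d ∧ ∀ x ∈ K, ∃ z : L, x = (d : ℤ) • z := by
  classical
  let bs := Module.Free.chooseBasis ℤ L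
  have coord : ∀ (d : ℕ) (x : L), (∀ ψ : L →ₗ[ℤ] ℤ, (d : ℤ) ∣ ψ x) → ∃ z : L, x = (d : ℤ) • z := by
    intro d x hx
    choose c hc using fun i => hx (bs.coord i)
    refine ⟨∑ i, c i • bs i, ?_⟩
    rw [Finset.smul_sum]
    conv_lhs => rw [← bs.sum_repr x]
    refine Finset.sum_congr rfl fun i _ => ?_
    have := hc i
    rw [Module.Basis.coord_apply] at this
    rw [this, mul_smul]
  by_cases hne : ∃ a : ℕ, 0 < a ∧ ∃ φ : L →ₗ[ℤ] ℤ, ∃ x ∈ K, φ x = a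
  · have hmin := fun m => Nat.find_min hne (m := m)
    obtain ⟨ha, φ, y, hy, hφ⟩ := Nat.find_spec hne
    set a := Nat.find hne with hadef
    have M : ∀ (ψ : L →ₗ[ℤ] ℤ) (x : L), x ∈ K → 0 ≤ ψ x → ψ x < a → ψ x = 0 := by
      intro ψ x hx h0 hlt
      by_contra hc
      refine hmin (ψ x).toNat (by omega) ⟨by omega, ψ, x, hx, by omega⟩
    have ha' : (0 : ℤ) < a := by exact_mod_cast ha
    -- if some functional takes value a at u, then a divides all its values on K
    have S2 : ∀ (θ : L →ₗ[ℤ] ℤ) (u x : L), u ∈ K → x ∈ K → θ u = a → (a : ℤ) ∣ θ x := by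
      intro θ u x hu hx hθ
      have e : θ (x - (θ x / a) • u) = θ x % a := by
        rw [map_sub, map_smul, hθ, smul_eq_mul, Int.emod_def]; ring
      have := M θ (x - (θ x / a) • u) (K.sub_mem hx (K.zsmul_mem hu _))
        (by rw [e]; exact Int.emod_nonneg _ ha'.ne') (by rw [e]; exact Int.emod_lt_of_pos _ ha')
      rw [e] at this
      exact Int.dvd_of_emod_eq_zero this
    have S1 : ∀ ψ : L →ₗ[ℤ] ℤ, (a : ℤ) ∣ ψ y := by
      intro ψ
      have e : (ψ - (ψ y / a) • φ) y = ψ y % a := by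
        rw [LinearMap.sub_apply, LinearMap.smul_apply, hφ, smul_eq_mul, Int.emod_def]; ring
      have := M (ψ - (ψ y / a) • φ) y hy
        (by rw [e]; exact Int.emod_nonneg _ ha'.ne') (by rw [e]; exact Int.emod_lt_of_pos _ ha')
      rw [e] at this
      exact Int.dvd_of_emod_eq_zero this
    have S3 : ∀ x ∈ K, ∀ ψ : L →ₗ[ℤ] ℤ, (a : ℤ) ∣ ψ x := by
      intro x hx ψ
      obtain ⟨c, hc⟩ := S1 ψ
      have h2 : (a : ℤ) ∣ φ x := S2 φ y x hy hx hφ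
      have h3 := S2 (φ + (ψ - c • φ)) y x hy hx (by simp [hφ, hc]; ring)
      have e : ψ x = (φ + (ψ - c • φ)) x - (1 - c) * φ x := by simp; ring
      rw [e]
      exact dvd_sub h3 (Dvd.dvd.mul_left h2 _)
    by_cases h1 : a = 1
    · exfalso
      rw [h1] at hφ
      have hsurj : LinearMap.range φ = ⊤ := by
        rw [LinearMap.range_eq_top]
        intro c
        exact ⟨c • y, by simp [hφ]⟩
      have hr := Submodule.finrank_quotient_add_finrank (LinearMap.ker φ)
      rw [(φ.quotKerEquivOfSurjective (LinearMap.range_eq_top.1 hsurj)).finrank_eq,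
        Module.finrank_self] at hr
      let bk := Module.finBasis ℤ (LinearMap.ker φ)
      let S : Finset (L ⧸ K) :=
        Finset.univ.image fun i => ((bk i : L) : L ⧸ K)
      have hS : AddSubgroup.closure (S : Set (L ⧸ K)) = ⊤ := by
        rw [eq_top_iff]
        rintro q -
        obtain ⟨x, rfl⟩ := QuotientAddGroup.mk_surjective q
        have hk : x - φ x • y ∈ LinearMap.ker φ := by
          rw [LinearMap.mem_ker]; simp [hφ]
        have e1 : ((x : L) : L ⧸ K) = ((x - φ x • y : L) : L ⧸ K) := by
          rw [QuotientAddGroup.eq]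
          have : -x + (x - φ x • y) = -(φ x • y) := by abel
          rw [this]
          exact K.neg_mem (K.zsmul_mem hy _)
        have e2 := congrArg Subtype.val (bk.sum_repr ⟨_, hk⟩)
        rw [e1]
        simp only [Submodule.coe_sum, Submodule.coe_smul] at e2
        rw [← e2]
        change QuotientAddGroup.mk' K _ ∈ _
        rw [map_sum]
        refine AddSubgroup.sum_mem _ fun i _ => ?_
        rw [map_zsmul]
        refine AddSubgroup.zsmul_mem _ (AddSubgroup.subset_closure ?_) _
        simp only [S, Finset.coe_image, Finset.coe_univ, Set.image_univ]
        exact ⟨i, rfl⟩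
      have hc : S.card ≤ Module.finrank ℤ (LinearMap.ker φ) := by
        refine Finset.card_image_le.trans ?_
        simp
      have : mgen (L ⧸ K) ≤ S.card := Nat.sInf_le ⟨S, rfl, hS⟩
      omega
    · exact ⟨a, by omega, fun x hx => coord a x (S3 x hx)⟩
  · refine ⟨2, le_rfl, fun x hx => coord 2 x fun ψ => ?_⟩
    have : ψ x = 0 := by
      by_contra hc
      rcases lt_or_gt_of_ne hc with hlt | hgt
      · exact hne ⟨(-ψ x).toNat, by omega, ψ, -x, K.neg_mem hx, by simp; omega⟩
      · exact hne ⟨(ψ x).toNat, by omega, ψ, x, hx, by omega⟩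
    rw [this]; exact dvd_zero _

lemma mem_mulSub {m a : ℕ} {x : Fin m → ℤ} : x ∈ mulSub m a ↔ ∃ z, (a : ℤ) • z = x := by
  simp [mulSub, AddSubgroup.mem_map]

lemma tower_step (n : ℕ) (G : ℕ → AddSubgroup (Fin (n + 1) → ℤ))
    (hdec : Antitone G) (hrho : towerRho G = n + 1) (i : ℕ) :
    ∃ k d : ℕ, 2 ≤ d ∧ ∀ x ∈ G k, ∃ z ∈ G i, x = (d : ℤ) • z := by
  have h1 : n + 1 ≤ towerR G i := by
    exact hrho.symm.le.trans (Nat.sInf_le ⟨i, rfl⟩)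
  have hmem : towerR G i ∈
      {d : ℕ | ∃ j : ℕ, d = mgen (↥(G i) ⧸ ((G (i + j)).addSubgroupOf (G i)))} := by
    refine Nat.sSup_mem ⟨_, 0, rfl⟩ ?_
    by_contra hb
    have : towerR G i = 0 := Nat.sSup_of_not_bddAbove hb
    omega
  obtain ⟨j, hj⟩ := hmem
  rw [hj] at h1
  have : Module.Free ℤ (G i) :=
    inferInstanceAs (Module.Free ℤ (AddSubgroup.toIntSubmodule (G i)))
  have : Module.Finite ℤ (G i) :=
    inferInstanceAs (Module.Finite ℤ (AddSubgroup.toIntSubmodule (G i)))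
  have hr : Module.finrank ℤ (G i) ≤ n + 1 := by
    have := Submodule.finrank_le (AddSubgroup.toIntSubmodule (G i))
    rw [Module.finrank_fin_fun] at this
    exact this
  obtain ⟨d, hd, hz⟩ := key_div n hr _ h1
  refine ⟨i + j, d, hd, fun x hx => ?_⟩
  obtain ⟨z, e⟩ := hz ⟨x, hdec (Nat.le_add_right i j) hx⟩ (by
    rw [AddSubgroup.mem_addSubgroupOf]; exact hx)
  exact ⟨z, z.2, congrArg Subtype.val e⟩

/-- Let `𝔤 = {G = G_0 ⊇ G_1 ⊇ ⋯}` be a tower of finite-index subgroups of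
`G = ℤⁿ⁺¹` with `ρ(𝔤) = n + 1`. Then there are sequences `a_k → ∞`, `b_k → ∞` of positive
integers with `a_k·G ⊇ G_k ⊇ b_k·G` for all `k`. -/
theorem tower_squeeze_of_rho_full (n : ℕ) (G : ℕ → AddSubgroup (Fin (n + 1) → ℤ))
    (hG0 : G 0 = ⊤)
    (hdec : ∀ k, G (k + 1) ≤ G k)
    (hfin : ∀ k, (G k).FiniteIndex)
    (hrho : towerRho G = n + 1) :
    ∃ a b : ℕ → ℕ,
      (∀ k, 0 < a k) ∧ (∀ k, 0 < b k) ∧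
      Filter.Tendsto a Filter.atTop Filter.atTop ∧
      Filter.Tendsto b Filter.atTop Filter.atTop ∧
      (∀ k, G k ≤ mulSub (n + 1) (a k)) ∧
      (∀ k, mulSub (n + 1) (b k) ≤ G k) := by
  classical
  have hanti : Antitone G := antitone_nat_of_succ_le hdec
  have hex : ∀ s : ℕ, ∃ k A : ℕ, s + 1 ≤ A ∧ G k ≤ mulSub (n + 1) A := by
    intro s
    induction s with
    | zero => exact ⟨0, 1, le_rfl, fun x _ => mem_mulSub.2 ⟨x, by simp⟩⟩
    | succ s ih =>
      obtain ⟨i, A, hA, hi⟩ := ih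
      obtain ⟨k, d, hd, hk⟩ := tower_step n G hanti hrho i
      refine ⟨k, A * d, by nlinarith, fun x hx => ?_⟩
      obtain ⟨z, hz, rfl⟩ := hk x hx
      obtain ⟨w, rfl⟩ := mem_mulSub.1 (hi hz)
      exact mem_mulSub.2 ⟨w, by rw [smul_smul]; push_cast; rw [mul_comm]⟩
  have h1 : ∀ k, G k ≤ mulSub (n + 1) 1 := fun k x _ => mem_mulSub.2 ⟨x, by simp⟩
  refine ⟨fun k => Nat.findGreatest (fun A => G k ≤ mulSub (n + 1) A) (k + 1),
    fun k => (G k).index * (k + 1), fun k => ?_, fun k => ?_, ?_, ?_, fun k => ?_, fun k => ?_⟩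
  · exact Nat.le_findGreatest (P := fun A => G k ≤ mulSub (n + 1) A) (by omega) (h1 k)
  · exact Nat.mul_pos (Nat.pos_of_ne_zero (hfin k).index_ne_zero) (Nat.succ_pos k)
  · rw [Filter.tendsto_atTop_atTop]
    intro s
    obtain ⟨K, A, hA, hK⟩ := hex s
    refine ⟨max K A, fun k hk => ?_⟩
    have := Nat.le_findGreatest (P := fun A => G k ≤ mulSub (n + 1) A) (n := k + 1) (m := A)
      (by omega) ((hanti (by omega)).trans hK)
    exact le_trans (by omega) this
  · refine Filter.tendsto_atTop_mono (fun k => ?_) Filter.tendsto_id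
    have := Nat.pos_of_ne_zero (hfin k).index_ne_zero
    simp only [id]
    nlinarith
  · exact Nat.findGreatest_spec (P := fun A => G k ≤ mulSub (n + 1) A) (m := 1) (by omega) (h1 k)
  · intro x hx
    obtain ⟨z, rfl⟩ := mem_mulSub.1 hx
    push_cast
    rw [mul_comm, mul_smul]
    refine AddSubgroup.zsmul_mem _ ?_ _
    rw [natCast_zsmul]
    exact AddSubgroup.nsmul_index_mem (G k) z

end
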